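/- arXiv:1907.02308 — 2 statements merged into one kernel-verified Lean document; each statement's English description precedes it below -/
import Mathlib

section
/- Let w be a primitive word of length n over a linearly ordered alphabet and L = abwt(w). Then for every row index 0 ≤ i < n, LF(i) = C − rank_{L[i]}(L, i−1) − 1, where C is the total number of positions t with 0 ≤ t < n such that L[t] ≤ L[i] in the standard order. -/
namespace Paper

variable {α : Type*}

/-- Extended alternating lexicographic strict order; the flag `b` is `true`
when the current position index is even. -/
def altLtAux [LinearOrder α] : Bool → List α → List α → Prop
  | _, [], [] => False
  | b, [], _ :: _ => b = true
  | b, _ :: _, [] => b = false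
  | b, c :: x, d :: y => (if b then c < d else d < c) ∨ (c = d ∧ altLtAux (!b) x y)

/-- The alternating lexicographic strict order (positions indexed from 0). -/
def AltLt [LinearOrder α] (x y : List α) : Prop := altLtAux true x y

/-- The reflexive alternating lexicographic order. -/
def AltLe [LinearOrder α] (x y : List α) : Prop := x = y ∨ AltLt x y

/-- A word is primitive if its cyclic rotations are pairwise distinct. -/
def Primitive (w : List α) : Prop :=
  ∀ i j, i < w.length → j < w.length → w.rotate i = w.rotate j → i = j
theorem altLtAux_asymm [LinearOrder α] : ∀ (x y : List α) (b : Bool),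
    altLtAux b x y → ¬ altLtAux b y x
  | [], [], b => by simp [altLtAux]
  | [], _ :: _, b => by simp [altLtAux]
  | _ :: _, [], b => by simp [altLtAux]
  | c :: x, d :: y, b => by
    have ih := altLtAux_asymm x y (!b)
    intro h1 h2
    simp only [altLtAux] at h1 h2
    rcases h1 with h1 | ⟨h1, h1'⟩ <;> rcases h2 with h2 | ⟨h2, h2'⟩
    · cases b <;> simp at h1 h2 <;> exact lt_asymm h1 h2
    · subst h2; cases b <;> simp at h1
    · subst h1; cases b <;> simp at h2
    · exact ih h1' h2'

theorem altLtAux_append [LinearOrder α] (e : α) : ∀ (x y : List α) (b : Bool),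
    x.length = y.length → altLtAux b (x ++ [e]) (y ++ [e]) → altLtAux (!b) y x
  | [], [], b => by simp [altLtAux]
  | [], _ :: _, b => by simp
  | _ :: _, [], b => by simp
  | c :: x, d :: y, b => by
    intro hl h
    have ih := altLtAux_append e x y (!b) (by simpa using hl)
    simp only [altLtAux, List.cons_append] at h ⊢
    rcases h with h | ⟨h, h'⟩
    · left; cases b <;> simpa using h
    · right; exact ⟨h.symm, ih h'⟩

theorem rotate_last (x : List α) (c : α) :
    (x ++ [c]).rotate ((x ++ [c]).length - 1) = c :: x := by
  have : (x ++ [c]).length - 1 = x.length := by simp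
  rw [this, List.rotate_append_length_eq]; rfl

/-- the LF-mapping of the ABWT satisfies
`LF i = C − rank_{L i}(L, i−1) − 1`, where `C` is the number of positions `t`
with `L t ≤ L i` in the standard order, and `rank_{L i}(L, i−1)` is the number
of occurrences of `L i` among `L 0, …, L (i-1)`. -/
theorem abwt_LF_formula [LinearOrder α] (n : ℕ) (w : List α)
    (hw : w.length = n) (hprim : Primitive w)
    (rows : Fin n → List α) (L : Fin n → α) (LF : Fin n → Fin n)
    (hrows : ∀ j : Fin n, ∃ i : Fin n, rows i = w.rotate j.val)
    (hsorted : ∀ i j : Fin n, i < j → AltLt (rows i) (rows j))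
    (hL : ∀ i, (rows i).getLast? = some (L i))
    (hLF : ∀ i, rows (LF i) = (rows i).rotate ((rows i).length - 1)) :
    ∀ i : Fin n, ((LF i : ℕ) : ℤ) =
      ((Finset.univ.filter fun t : Fin n => L t ≤ L i).card : ℤ)
        - ((Finset.univ.filter fun t : Fin n => t < i ∧ L t = L i).card : ℤ) - 1 := by
  have hirr : ∀ x : List α, ¬ AltLt x x := fun x h => altLtAux_asymm x x true h h
  choose g hg using hrows
  have ginj : Function.Injective g := by
    intro a b hab
    apply Fin.ext
    apply hprim _ _ (by omega) (by omega)
    rw [← hg, ← hg, hab]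
  have gsurj : Function.Surjective g := Finite.surjective_of_injective ginj
  have hlen : ∀ i, (rows i).length = n := by
    intro i
    obtain ⟨j, rfl⟩ := gsurj i
    rw [hg, List.length_rotate, hw]
  have hdec : ∀ i, ∃ x, rows i = x ++ [L i] := by
    intro i
    exact List.getLast?_eq_some_iff.mp (hL i)
  choose X hX using hdec
  have hXlen : ∀ i j, (X i).length = (X j).length := by
    intro i j
    have h1 := hlen i
    have h2 := hlen j
    rw [hX] at h1 h2
    simp at h1 h2
    omega
  have hR : ∀ i, rows (LF i) = L i :: X i := by
    intro i
    rw [hLF, hX, rotate_last]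
  have hof : ∀ i j, AltLt (rows i) (rows j) → i < j := by
    intro i j h
    rcases lt_trichotomy i j with h1 | h1 | h1
    · exact h1
    · subst h1; exact absurd h (hirr _)
    · exact absurd h (altLtAux_asymm _ _ _ (hsorted _ _ h1))
  have h1 : ∀ s t, L s < L t → LF s < LF t := by
    intro s t h
    apply hof
    rw [hR, hR]
    simp [AltLt, altLtAux, h]
  have h2 : ∀ s t, L s = L t → s < t → LF t < LF s := by
    intro s t h hst
    apply hof
    rw [hR, hR]
    have := hsorted _ _ hst
    rw [hX s, hX t, h] at this
    have := altLtAux_append _ _ _ _ (hXlen s t) this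
    simp only [AltLt, altLtAux]
    exact Or.inr ⟨h.symm, this⟩
  have hiff : ∀ s t, LF s < LF t ↔ (L s < L t ∨ (L s = L t ∧ t < s)) := by
    intro s t
    constructor
    · intro h
      rcases lt_trichotomy (L s) (L t) with a | a | a
      · exact Or.inl a
      · rcases lt_trichotomy s t with c | c | c
        · exact absurd h (lt_asymm (h2 _ _ a c))
        · subst c; exact absurd h (lt_irrefl _)
        · exact Or.inr ⟨a, c⟩
      · exact absurd h (lt_asymm (h1 _ _ a))
    · rintro (h | ⟨h, h'⟩)
      · exact h1 _ _ h
      · exact h2 _ _ h.symm h'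
  have LFinj : Function.Injective LF := by
    intro s t h
    rcases lt_trichotomy (L s) (L t) with a | a | a
    · exact absurd h (h1 _ _ a).ne
    · rcases lt_trichotomy s t with c | c | c
      · exact absurd h (h2 _ _ a c).ne'
      · exact c
      · exact absurd h (h2 _ _ a.symm c).ne
    · exact absurd h (h1 _ _ a).ne'
  have LFbij : Function.Bijective LF := Finite.injective_iff_bijective.mp LFinj
  intro i
  have hc : (LF i : ℕ) = (Finset.univ.filter fun t : Fin n => LF t < LF i).card := by
    rw [← Fin.card_Iio (LF i)]
    symm
    apply Finset.card_bij (fun t _ => LF t)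
    · simp
    · intro a _ b _ h; exact LFinj h
    · intro b hb
      obtain ⟨a, rfl⟩ := LFbij.2 b
      exact ⟨a, by simpa using hb, rfl⟩
  have hsplit : (Finset.univ.filter fun t : Fin n => L t ≤ L i) =
      ((Finset.univ.filter fun t : Fin n => LF t < LF i) ∪
        (Finset.univ.filter fun t : Fin n => t < i ∧ L t = L i)) ∪ {i} := by
    ext t
    simp only [Finset.mem_filter, Finset.mem_univ, true_and, Finset.mem_union,
      Finset.mem_singleton, hiff]
    constructor
    · intro h
      rcases h.lt_or_eq with a | a
      · simp [a]
      · rcases lt_trichotomy t i with c | c | c <;> simp [a, c]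
    · rintro ((h | h) | h) 
      · rcases h with h | h
        · exact h.le
        · exact h.1.le
      · exact h.2.le
      · rw [h]
  have hcard := congrArg Finset.card hsplit
  rw [Finset.card_union_of_disjoint, Finset.card_union_of_disjoint,
    Finset.card_singleton] at hcard
  · omega
  · rw [Finset.disjoint_left]
    intro t ht ht'
    simp only [Finset.mem_filter, Finset.mem_univ, true_and, hiff] at ht ht'
    rcases ht with h | h
    · exact h.ne ht'.2
    · exact lt_asymm h.2 ht'.1
  · simp

end Paper
end

section
/- Let Σ be a finite alphabet with |Σ| ≥ 2 and let K = (Id, π) where π is a linear order on Σ. Then BWT_K is rank-invertible if and only if π = Id (the standard order) or π = Rev (the reverse of the standard order). -/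
namespace Paper

variable {α : Type*}

/-- Generalized lexicographic strict order on equal-length words determined by a
sequence `σ` of strict orders, one per position (`σ d` is used at position `d`). -/
def KLt (σ : ℕ → α → α → Prop) : ℕ → List α → List α → Prop
  | _, [], _ => False
  | _, _ :: _, [] => False
  | d, a :: x, b :: y => σ d a b ∨ (a = b ∧ KLt σ (d + 1) x y)

/-- Rank-invertibility of the generalized BWT determined by the sequence of
per-position strict orders `σ`: there is a function `f` computing `LF i` from
the Parikh vector of the last column `L`, the symbol `L i`, and the number of
occurrences of `L i` in `L[0..i]`. -/
def RankInvertible [LinearOrder α] (σ : ℕ → α → α → Prop) : Prop :=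
  ∃ f : (α → ℕ) → α → ℕ → ℕ,
    ∀ (n : ℕ) (w : List α), w.length = n → Primitive w →
      ∀ (rows : Fin n → List α) (L : Fin n → α) (LF : Fin n → Fin n),
        (∀ j : Fin n, ∃ i : Fin n, rows i = w.rotate j.val) →
        (∀ i j : Fin n, i < j → KLt σ 0 (rows i) (rows j)) →
        (∀ i, (rows i).getLast? = some (L i)) →
        (∀ i, rows (LF i) = (rows i).rotate ((rows i).length - 1)) →
        ∀ i : Fin n, (LF i : ℕ) =
          f (fun c => (List.ofFn L).count c) (L i)
            (((List.ofFn L).take (i.val + 1)).count (L i))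

theorem KLt_irrefl {σ : ℕ → α → α → Prop} (h : ∀ d a, ¬ σ d a a) :
    ∀ (x : List α) (d : ℕ), ¬ KLt σ d x x
  | [], d => by simp [KLt]
  | a :: x, d => by
      simp only [KLt, true_and, not_or]
      exact ⟨h d a, KLt_irrefl h x (d + 1)⟩

theorem KLt_asymm {σ : ℕ → α → α → Prop} (h : ∀ d a b, σ d a b → ¬ σ d b a) :
    ∀ (x y : List α) (d : ℕ), KLt σ d x y → ¬ KLt σ d y x
  | [], y, d => by simp [KLt]
  | a :: x, [], d => by simp [KLt]
  | a :: x, b :: y, d => by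
      simp only [KLt]
      rintro (h1 | ⟨rfl, h1⟩) (h2 | ⟨h3, h2⟩)
      · exact h _ _ _ h1 h2
      · subst h3; exact h _ _ _ h1 h1
      · exact h _ _ _ h2 h2
      · exact KLt_asymm h x y (d + 1) h1 h2

theorem KLt_snoc {σ : ℕ → α → α → Prop} (h : ∀ d a, ¬ σ d a a) (c : α) :
    ∀ (u v : List α) (d : ℕ), u.length = v.length →
      KLt σ d (u ++ [c]) (v ++ [c]) → KLt σ d u v
  | [], [], d => by simp [KLt, h]
  | [], b :: v, d => by simp
  | a :: u, [], d => by simp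
  | a :: u, b :: v, d => by
      simp only [KLt, List.cons_append, List.length_cons]
      rintro hl (h1 | ⟨h0, h1⟩)
      · exact Or.inl h1
      · exact Or.inr ⟨h0, KLt_snoc h c u v (d + 1) (by omega) h1⟩

theorem KLt_shift {σ : ℕ → α → α → Prop} (h : ∀ d a b, σ d a b → σ (d + 1) a b) :
    ∀ (u v : List α) (d : ℕ), KLt σ d u v → KLt σ (d + 1) u v
  | [], v, d => by simp [KLt]
  | a :: u, [], d => by simp [KLt]
  | a :: u, b :: v, d => by
      simp only [KLt]
      rintro (h1 | ⟨h0, h1⟩)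
      · exact Or.inl (h _ _ _ h1)
      · exact Or.inr ⟨h0, KLt_shift h u v (d + 1) h1⟩

theorem KLt_shift_rev {σ : ℕ → α → α → Prop} (h : ∀ d a b, σ d a b → σ (d + 1) b a) :
    ∀ (u v : List α) (d : ℕ), KLt σ d u v → KLt σ (d + 1) v u
  | [], v, d => by simp [KLt]
  | a :: u, [], d => by simp [KLt]
  | a :: u, b :: v, d => by
      simp only [KLt]
      rintro (h1 | ⟨h0, h1⟩)
      · exact Or.inl (h _ _ _ h1)
      · exact Or.inr ⟨h0.symm, KLt_shift_rev h u v (d + 1) h1⟩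

/-- all rows have length `n`, and the structure of `LF`. -/
theorem LF_core [LinearOrder α] {σ : ℕ → α → α → Prop}
    (hasy : ∀ d a b, σ d a b → ¬ σ d b a)
    (h0 : ∀ a b, a < b → σ 0 a b)
    {n : ℕ} {w : List α} (hw : w.length = n) (hprim : Primitive w)
    {rows : Fin n → List α} {L : Fin n → α} {LF : Fin n → Fin n}
    (hrows : ∀ j : Fin n, ∃ i : Fin n, rows i = w.rotate j.val)
    (hsort : ∀ i j : Fin n, i < j → KLt σ 0 (rows i) (rows j))
    (hL : ∀ i, (rows i).getLast? = some (L i))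
    (hLF : ∀ i, rows (LF i) = (rows i).rotate ((rows i).length - 1)) :
    Function.Injective LF ∧ (∀ i j, L i < L j → LF i < LF j) ∧
    (∀ i j, i < j → L i = L j → ∃ u v : List α, KLt σ 0 u v ∧
      (KLt σ 1 u v → LF i < LF j) ∧ (KLt σ 1 v u → LF j < LF i)) := by
  have hirr : ∀ d a, ¬ σ d a a := fun d a h => hasy d a a h h
  have hrinj : Function.Injective rows := by
    intro i j hij
    rcases lt_trichotomy i j with h | h | h
    · have := hsort i j h
      rw [hij] at this
      exact absurd this (KLt_irrefl hirr _ _)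
    · exact h
    · have := hsort j i h
      rw [hij] at this
      exact absurd this (KLt_irrefl hirr _ _)
  have hlt : ∀ i j, KLt σ 0 (rows i) (rows j) → i < j := by
    intro i j h
    rcases lt_trichotomy i j with h' | h' | h'
    · exact h'
    · subst h'; exact absurd h (KLt_irrefl hirr _ _)
    · exact absurd (hsort j i h') (KLt_asymm hasy _ _ _ h)
  choose g hg using hrows
  have ginj : Function.Injective g := by
    intro i j hij
    have h1 := hg i
    rw [hij, hg j] at h1
    exact Fin.ext (hprim _ _ (by omega) (by omega) h1.symm)
  have hlen : ∀ i, (rows i).length = n := by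
    intro i
    obtain ⟨j, rfl⟩ := (Finite.injective_iff_surjective.mp ginj) i
    rw [hg j, List.length_rotate, hw]
  have hdec : ∀ i, ∃ u, rows i = u ++ [L i] ∧ rows (LF i) = L i :: u ∧ u.length + 1 = n := by
    intro i
    obtain ⟨u, hu⟩ := List.getLast?_eq_some_iff.mp (hL i)
    refine ⟨u, hu, ?_, ?_⟩
    · rw [hLF i, hu]
      have : (u ++ [L i]).length - 1 = u.length := by simp
      rw [this, List.rotate_append_length_eq]
      rfl
    · have := hlen i
      rw [hu] at this
      simpa using this
  refine ⟨?_, ?_, ?_⟩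
  · intro i j hij
    obtain ⟨u, hu, hu', _⟩ := hdec i
    obtain ⟨v, hv, hv', _⟩ := hdec j
    apply hrinj
    rw [hij, hv'] at hu'
    obtain ⟨h1, h2⟩ := List.cons.inj hu'
    rw [hu, hv, h1, h2]
  · intro i j hij
    obtain ⟨u, hu, hu', _⟩ := hdec i
    obtain ⟨v, hv, hv', _⟩ := hdec j
    apply hlt
    rw [hu', hv']
    exact Or.inl (h0 _ _ hij)
  · intro i j hij hLij
    obtain ⟨u, hu, hu', hul⟩ := hdec i
    obtain ⟨v, hv, hv', hvl⟩ := hdec j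
    refine ⟨u, v, ?_, ?_, ?_⟩
    · have := hsort i j hij
      rw [hu, hv, hLij] at this
      exact KLt_snoc hirr _ _ _ _ (by omega) this
    · intro h
      apply hlt
      rw [hu', hv']
      exact Or.inr ⟨hLij, h⟩
    · intro h
      apply hlt
      rw [hu', hv']
      exact Or.inr ⟨hLij.symm, h⟩

theorem count_ofFn [DecidableEq α] {n : ℕ} (L : Fin n → α) (c : α) :
    (List.ofFn L).count c = (Finset.univ.filter (fun j => L j = c)).card := by
  induction n with
  | zero => simp
  | succ n ih =>
    rw [List.ofFn_succ, List.count_cons, ih, Fin.univ_succ, Finset.filter_cons]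
    split_ifs with h1 h2 h2 <;>
      simp_all [Finset.filter_map, Function.comp_def]

theorem count_take_ofFn [DecidableEq α] {n : ℕ} (L : Fin n → α) (c : α) (m : ℕ) :
    ((List.ofFn L).take m).count c =
      (Finset.univ.filter (fun j : Fin n => L j = c ∧ j.val < m)).card := by
  induction n generalizing m with
  | zero => simp
  | succ n ih =>
    cases m with
    | zero => simp
    | succ m =>
      rw [List.ofFn_succ, List.take_succ_cons, List.count_cons, ih, Fin.univ_succ,
        Finset.filter_cons]
      split_ifs with h1 h2 h2 <;>
        simp_all [Finset.filter_map, Function.comp_def]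

theorem LF_card {n : ℕ} {LF : Fin n → Fin n} (hinj : Function.Injective LF) (i : Fin n) :
    (LF i : ℕ) = (Finset.univ.filter (fun j => LF j < LF i)).card := by
  have h1 : (Finset.univ.filter (fun k : Fin n => k < LF i)).card = (LF i : ℕ) := by
    have : Finset.univ.filter (fun k : Fin n => k < LF i) = Finset.Iio (LF i) := by
      ext; simp
    rw [this, Fin.card_Iio]
  rw [← h1]
  symm
  apply Finset.card_bij (fun j _ => LF j)
  · intro a ha; simpa using ha
  · intro a _ b _ h; exact hinj h
  · intro b hb
    obtain ⟨a, rfl⟩ := (Finite.injective_iff_surjective.mp hinj) b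
    exact ⟨a, by simpa using hb, rfl⟩

theorem card_L_lt [LinearOrder α] [Fintype α] {n : ℕ} (L : Fin n → α) (c : α) :
    (Finset.univ.filter (fun j => L j < c)).card =
      ∑ d ∈ Finset.univ.filter (fun d => d < c), (List.ofFn L).count d := by
  simp only [count_ofFn]
  rw [Finset.card_eq_sum_card_fiberwise (f := L) (t := Finset.univ.filter (fun d => d < c))]
  · apply Finset.sum_congr rfl
    intro d hd
    congr 1
    ext j
    simp only [Finset.mem_filter, Finset.mem_univ, true_and] at hd ⊢
    constructor
    · exact fun h => h.2
    · rintro rfl; exact ⟨hd, rfl⟩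
  · intro j hj
    simpa using hj

theorem LF_id [LinearOrder α] [Fintype α] {n : ℕ} {L : Fin n → α} {LF : Fin n → Fin n}
    (hinj : Function.Injective LF) (h1 : ∀ i j, L i < L j → LF i < LF j)
    (h2 : ∀ i j, i < j → L i = L j → LF i < LF j) (i : Fin n) :
    (LF i : ℕ) = ∑ d ∈ Finset.univ.filter (fun d => d < L i), (List.ofFn L).count d
      + (((List.ofFn L).take (i.val + 1)).count (L i) - 1) := by
  rw [LF_card hinj, ← card_L_lt, count_take_ofFn]
  have e1 : Finset.univ.filter (fun j => LF j < LF i) =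
      Finset.univ.filter (fun j => L j < L i) ∪
        (Finset.univ.filter (fun j : Fin n => L j = L i ∧ j.val < i.val + 1)).erase i := by
    ext j
    simp only [Finset.mem_filter, Finset.mem_univ, true_and, Finset.mem_union, Finset.mem_erase]
    constructor
    · intro h
      rcases lt_trichotomy (L j) (L i) with h' | h' | h'
      · exact Or.inl h'
      · right
        refine ⟨fun e => by subst e; exact lt_irrefl _ h, h', ?_⟩
        by_contra hc
        exact absurd h (h2 i j (by rw [Fin.lt_def]; omega) h'.symm).asymm
      · exact absurd h (h1 _ _ h').asymm
    · rintro (h | ⟨h, h', h''⟩)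
      · exact h1 _ _ h
      · refine h2 _ _ ?_ h'
        have : j.val ≠ i.val := fun e => h (Fin.ext e)
        rw [Fin.lt_def]; omega
  rw [e1, Finset.card_union_of_disjoint, Finset.card_erase_of_mem]
  · simp
  · rw [Finset.disjoint_left]
    intro j hj hj'
    simp at hj hj'
    exact absurd hj (by rw [hj'.2.1]; exact lt_irrefl _)

theorem LF_rev [LinearOrder α] [Fintype α] {n : ℕ} {L : Fin n → α} {LF : Fin n → Fin n}
    (hinj : Function.Injective LF) (h1 : ∀ i j, L i < L j → LF i < LF j)
    (h2 : ∀ i j, i < j → L i = L j → LF j < LF i) (i : Fin n) :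
    (LF i : ℕ) = ∑ d ∈ Finset.univ.filter (fun d => d < L i), (List.ofFn L).count d
      + ((List.ofFn L).count (L i) - ((List.ofFn L).take (i.val + 1)).count (L i)) := by
  rw [LF_card hinj, ← card_L_lt, count_take_ofFn, count_ofFn]
  have e1 : Finset.univ.filter (fun j => LF j < LF i) =
      Finset.univ.filter (fun j => L j < L i) ∪
        (Finset.univ.filter (fun j : Fin n => L j = L i) \
        Finset.univ.filter (fun j : Fin n => L j = L i ∧ j.val < i.val + 1)) := by
    ext j
    simp only [Finset.mem_filter, Finset.mem_univ, true_and, Finset.mem_union, Finset.mem_sdiff]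
    constructor
    · intro h
      rcases lt_trichotomy (L j) (L i) with h' | h' | h'
      · exact Or.inl h'
      · right
        refine ⟨h', fun hc => ?_⟩
        have hne : j.val ≠ i.val := fun e => by
          rw [Fin.ext e] at h
          exact lt_irrefl _ h
        exact absurd h (h2 j i (by rw [Fin.lt_def]; omega) h').asymm
      · exact absurd h (h1 _ _ h').asymm
    · rintro (h | ⟨h, h'⟩)
      · exact h1 _ _ h
      · refine h2 _ _ ?_ h.symm
        have : ¬ j.val < i.val + 1 := fun e => h' ⟨h, e⟩
        rw [Fin.lt_def]; omega
  rw [e1, Finset.card_union_of_disjoint, Finset.card_sdiff_of_subset]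
  · intro j; simp; tauto
  · rw [Finset.disjoint_left]
    intro j hj hj'
    simp at hj hj'
    exact absurd hj (by rw [hj'.1]; exact lt_irrefl _)

/-- the sequence of orders for `K = (Id, π)` -/
abbrev seqK [LinearOrder α] (π : α → α → Prop) : ℕ → α → α → Prop :=
  fun d => if d % 2 = 0 then (fun a b : α => a < b) else π

theorem rankInv_id [LinearOrder α] [Fintype α] :
    RankInvertible (seqK (fun a b : α => a < b)) := by
  refine ⟨fun P c r => ∑ d ∈ Finset.univ.filter (fun d => d < c), P d + (r - 1), ?_⟩
  intro n w hw hprim rows L LF hrows hsort hL hLF i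
  have hasy : ∀ d (a b : α), seqK (fun a b : α => a < b) d a b →
      ¬ seqK (fun a b : α => a < b) d b a := by
    intro d a b
    simp only [seqK, ite_self]
    exact fun h => h.asymm
  obtain ⟨hinj, h1, h2⟩ := LF_core hasy (by simp [seqK]) hw hprim hrows hsort hL hLF
  refine LF_id hinj h1 ?_ i
  intro i j hij hLij
  obtain ⟨u, v, hk, h3, _⟩ := h2 i j hij hLij
  exact h3 (KLt_shift (by simp [seqK]) u v 0 hk)

theorem rankInv_rev [LinearOrder α] [Fintype α] :
    RankInvertible (seqK (fun a b : α => b < a)) := by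
  refine ⟨fun P c r => ∑ d ∈ Finset.univ.filter (fun d => d < c), P d + (P c - r), ?_⟩
  intro n w hw hprim rows L LF hrows hsort hL hLF i
  have hasy : ∀ d (a b : α), seqK (fun a b : α => b < a) d a b →
      ¬ seqK (fun a b : α => b < a) d b a := by
    intro d a b
    simp only [seqK]
    split_ifs <;> exact fun h => h.asymm
  obtain ⟨hinj, h1, h2⟩ := LF_core hasy (by simp [seqK]) hw hprim hrows hsort hL hLF
  refine LF_rev hinj h1 ?_ i
  intro i j hij hLij
  obtain ⟨u, v, hk, _, h3⟩ := h2 i j hij hLij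
  refine h3 (KLt_shift_rev ?_ u v 0 hk)
  intro d a b
  rcases Nat.mod_two_eq_zero_or_one d with h | h
  · have h' : (d + 1) % 2 = 1 := by omega
    simp [seqK, h, h']
  · have h' : (d + 1) % 2 = 0 := by omega
    simp [seqK, h, h']

/-- Length-four words: the value forced on `f` by an explicit sorted rotation matrix. -/
theorem val4 [LinearOrder α] {σ : ℕ → α → α → Prop} {f : (α → ℕ) → α → ℕ → ℕ}
    (hf : ∀ (n : ℕ) (w : List α), w.length = n → Primitive w →
      ∀ (rows : Fin n → List α) (L : Fin n → α) (LF : Fin n → Fin n),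
        (∀ j : Fin n, ∃ i : Fin n, rows i = w.rotate j.val) →
        (∀ i j : Fin n, i < j → KLt σ 0 (rows i) (rows j)) →
        (∀ i, (rows i).getLast? = some (L i)) →
        (∀ i, rows (LF i) = (rows i).rotate ((rows i).length - 1)) →
        ∀ i : Fin n, (LF i : ℕ) =
          f (fun c => (List.ofFn L).count c) (L i)
            (((List.ofFn L).take (i.val + 1)).count (L i)))
    (p q r s : α) (hprim : Primitive [p, q, r, s])
    (τ τi : Fin 4 → Fin 4) (hτ : ∀ j, τ (τi j) = j)
    (LF : Fin 4 → Fin 4) (hLF : ∀ i, τ (LF i) = τ i + 3)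
    (hsort : ∀ i j : Fin 4, i < j →
      KLt σ 0 ([p, q, r, s].rotate (τ i)) ([p, q, r, s].rotate (τ j))) (i : Fin 4) :
    (LF i : ℕ) = f (fun c => [p, q, r, s].count c) (![s, p, q, r] (τ i))
      (((List.ofFn fun i => ![s, p, q, r] (τ i)).take (i.val + 1)).count
        (![s, p, q, r] (τ i))) := by
  have key := hf 4 [p, q, r, s] rfl hprim (fun i => [p, q, r, s].rotate (τ i))
    (fun i => ![s, p, q, r] (τ i)) LF (fun j => ⟨τi j, by rw [hτ]⟩) hsort ?_ ?_ i
  · rw [key]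
    congr 1
    congr 1
    funext c
    rw [count_ofFn]
    have hbij : Function.Bijective τ :=
      Finite.surjective_iff_bijective.mp (fun j => ⟨τi j, hτ j⟩)
    have : (Finset.univ.filter (fun j => ![s, p, q, r] (τ j) = c)).card =
        (Finset.univ.filter (fun j => ![s, p, q, r] j = c)).card := by
      apply Finset.card_bij (fun j _ => τ j)
      · intro a ha; simpa using ha
      · intro a _ b _ h; exact hbij.1 h
      · intro b hb
        obtain ⟨a, rfl⟩ := hbij.2 b
        exact ⟨a, by simpa using hb, rfl⟩
    rw [this, ← count_ofFn]
    apply List.Perm.count_eq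
    simp only [List.ofFn_succ, List.ofFn_zero]
    exact (List.perm_append_comm (l₁ := [s]) (l₂ := [p, q, r]))
  · intro i
    show ([p, q, r, s].rotate (τ i)).getLast? = some (![s, p, q, r] (τ i))
    generalize τ i = k
    fin_cases k <;> rfl
  · intro i
    show [p, q, r, s].rotate (τ (LF i)) =
      ([p, q, r, s].rotate (τ i)).rotate (([p, q, r, s].rotate (τ i)).length - 1)
    rw [hLF]
    generalize τ i = k
    fin_cases k <;> rfl

theorem prim4 {p q r s : α} (h : p ≠ r ∨ q ≠ s) : Primitive [p, q, r, s] := by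
  intro i j hi hj
  simp only [List.length_cons, List.length_nil] at hi hj
  interval_cases i <;> interval_cases j <;> simp [List.rotate] <;> grind

theorem not_acb [LinearOrder α] {π : α → α → Prop} {a b c : α} (ab : a < b) (bc : b < c)
    (hac : π a c) (hab : π a b) (hcb : π c b) : ¬ RankInvertible (seqK π) := by
  rintro ⟨f, hf⟩
  have ac := ab.trans bc
  have e0 := val4 hf a b a c (prim4 (by grind)) ![2, 0, 1, 3] ![1, 2, 0, 3] (by decide)
    ![2, 3, 1, 0] (by decide) (by
      simp [Fin.forall_fin_succ, KLt, List.rotate, seqK, ab, bc, ac, hac, hab, hcb]) 2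
  have e1 := val4 hf a a b c (prim4 (by grind)) ![0, 1, 2, 3] ![0, 1, 2, 3] (by decide)
    ![3, 0, 1, 2] (by decide) (by
      simp [Fin.forall_fin_succ, KLt, List.rotate, seqK, ab, bc, ac, hac, hab, hcb]) 1
  have hp : (fun x => [a, b, a, c].count x) = fun x => [a, a, b, c].count x := by
    funext x
    simp only [List.count_cons, List.count_nil]
    omega
  rw [hp] at e0
  simp [List.ofFn_succ, List.count_cons, ab.ne', ac.ne', ab.ne, ac.ne] at e0 e1
  omega

theorem not_bac [LinearOrder α] {π : α → α → Prop} {a b c : α} (ab : a < b) (bc : b < c)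
    (hba : π b a) (hbc : π b c) (hac : π a c) : ¬ RankInvertible (seqK π) := by
  rintro ⟨f, hf⟩
  have ac := ab.trans bc
  have e0 := val4 hf a a c b (prim4 (by grind)) ![0, 1, 3, 2] ![0, 1, 3, 2] (by decide)
    ![2, 0, 3, 1] (by decide) (by
      simp [Fin.forall_fin_succ, KLt, List.rotate, seqK, ab, bc, ac, hba, hbc, hac]) 1
  have e1 := val4 hf a a b c (prim4 (by grind)) ![1, 0, 2, 3] ![1, 0, 2, 3] (by decide)
    ![1, 3, 0, 2] (by decide) (by
      simp [Fin.forall_fin_succ, KLt, List.rotate, seqK, ab, bc, ac, hba, hbc, hac]) 0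
  have hp : (fun x => [a, a, c, b].count x) = fun x => [a, a, b, c].count x := by
    funext x
    simp only [List.count_cons, List.count_nil]
    omega
  rw [hp] at e0
  simp [List.ofFn_succ, List.count_cons, ab.ne', ac.ne', ab.ne, ac.ne] at e0 e1
  omega

theorem not_bca [LinearOrder α] {π : α → α → Prop} {a b c : α} (ab : a < b) (bc : b < c)
    (hbc : π b c) (hba : π b a) (hca : π c a) : ¬ RankInvertible (seqK π) := by
  rintro ⟨f, hf⟩
  have ac := ab.trans bc
  have e0 := val4 hf a b a c (prim4 (by grind)) ![0, 2, 1, 3] ![0, 2, 1, 3] (by decide)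
    ![3, 2, 0, 1] (by decide) (by
      simp [Fin.forall_fin_succ, KLt, List.rotate, seqK, ab, bc, ac, hbc, hba, hca]) 2
  have e1 := val4 hf a a b c (prim4 (by grind)) ![1, 0, 2, 3] ![1, 0, 2, 3] (by decide)
    ![1, 3, 0, 2] (by decide) (by
      simp [Fin.forall_fin_succ, KLt, List.rotate, seqK, ab, bc, ac, hbc, hba, hca]) 0
  have hp : (fun x => [a, b, a, c].count x) = fun x => [a, a, b, c].count x := by
    funext x
    simp only [List.count_cons, List.count_nil]
    omega
  rw [hp] at e0
  simp [List.ofFn_succ, List.count_cons, ab.ne', ac.ne', ab.ne, ac.ne] at e0 e1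
  omega

theorem not_cab [LinearOrder α] {π : α → α → Prop} {a b c : α} (ab : a < b) (bc : b < c)
    (hca : π c a) (hcb : π c b) (hab : π a b) : ¬ RankInvertible (seqK π) := by
  rintro ⟨f, hf⟩
  have ac := ab.trans bc
  have e0 := val4 hf a a c b (prim4 (by grind)) ![1, 0, 3, 2] ![1, 0, 3, 2] (by decide)
    ![1, 2, 3, 0] (by decide) (by
      simp [Fin.forall_fin_succ, KLt, List.rotate, seqK, ab, bc, ac, hca, hcb, hab]) 0
  have e1 := val4 hf a a b c (prim4 (by grind)) ![0, 1, 2, 3] ![0, 1, 2, 3] (by decide)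
    ![3, 0, 1, 2] (by decide) (by
      simp [Fin.forall_fin_succ, KLt, List.rotate, seqK, ab, bc, ac, hca, hcb, hab]) 1
  have hp : (fun x => [a, a, c, b].count x) = fun x => [a, a, b, c].count x := by
    funext x
    simp only [List.count_cons, List.count_nil]
    omega
  rw [hp] at e0
  simp [List.ofFn_succ, List.count_cons, ab.ne', ac.ne', ab.ne, ac.ne] at e0 e1
  omega

theorem triple_of_not_mono [LinearOrder α] [Fintype α] {π : α → α → Prop}
    (hπ : IsStrictTotalOrder α π) (hinv : RankInvertible (seqK π)) {a b c : α}
    (ab : a < b) (bc : b < c) : (π a b ↔ π a c) ∧ (π b c ↔ π a c) := by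
  have tri : ∀ x y, x < y → (π x y ∨ π y x) := fun x y h => by
    rcases trichotomous_of π x y with h' | h' | h'
    · exact Or.inl h'
    · exact absurd h' h.ne
    · exact Or.inr h'
  have asy : ∀ x y, π x y → π y x → False := fun x y h h' => asymm_of π h h'
  have tr : ∀ x y z, π x y → π y z → π x z := fun x y z h h' => trans_of π h h'
  have n1 := fun h1 h2 h3 => not_acb (π := π) ab bc h1 h2 h3 hinv
  have n2 := fun h1 h2 h3 => not_bac (π := π) ab bc h1 h2 h3 hinv
  have n3 := fun h1 h2 h3 => not_bca (π := π) ab bc h1 h2 h3 hinv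
  have n4 := fun h1 h2 h3 => not_cab (π := π) ab bc h1 h2 h3 hinv
  have t1 := tri a b ab
  have t2 := tri b c bc
  have t3 := tri a c (ab.trans bc)
  have s1 := asy a b
  have s2 := asy b c
  have s3 := asy a c
  have r1 := tr a b c
  have r2 := tr c b a
  clear tri asy tr hinv hπ
  rcases t1 with t1 | t1 <;> rcases t2 with t2 | t2 <;> rcases t3 with t3 | t3 <;> grind

theorem mono_of_inv [LinearOrder α] [Fintype α] [Nonempty α] {π : α → α → Prop}
    (hπ : IsStrictTotalOrder α π) (hinv : RankInvertible (seqK π)) :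
    (π = fun a b : α => a < b) ∨ (π = fun a b : α => b < a) := by
  obtain ⟨m, hm⟩ := Finite.exists_min (id : α → α)
  obtain ⟨M, hM⟩ := Finite.exists_max (id : α → α)
  simp only [id] at hm hM
  have key : ∀ a b, a < b → (π a b ↔ π m M) := by
    intro a b hab
    have h1 : π a b ↔ π m b := by
      rcases (hm a).eq_or_lt with h | h
      · rw [h]
      · exact (triple_of_not_mono hπ hinv h hab).2
    have h2 : π m b ↔ π m M := by
      rcases (hM b).eq_or_lt with h | h
      · rw [h]
      · exact (triple_of_not_mono hπ hinv ((hm a).trans_lt hab) h).1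
    exact h1.trans h2
  have irr : ∀ x, ¬ π x x := fun x => irrefl_of π x
  have asy : ∀ x y, π x y → ¬ π y x := fun x y h h' => asymm_of π h h'
  have tri : ∀ x y, x < y → ¬ π x y → π y x := fun x y h hn => by
    rcases trichotomous_of π x y with h' | h' | h'
    · exact absurd h' hn
    · exact absurd h' h.ne
    · exact h'
  by_cases hmM : π m M
  · left
    funext a b
    apply propext
    rcases lt_trichotomy a b with h | h | h
    · exact ⟨fun _ => h, fun _ => (key a b h).2 hmM⟩
    · subst h; exact ⟨fun h => absurd h (irr a), fun h => absurd h (lt_irrefl a)⟩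
    · exact ⟨fun h' => absurd h' (asy _ _ ((key b a h).2 hmM)), fun h' => absurd h' h.asymm⟩
  · right
    funext a b
    apply propext
    rcases lt_trichotomy a b with h | h | h
    · exact ⟨fun h' => absurd ((key a b h).1 h') hmM, fun h' => absurd h' h.asymm⟩
    · subst h; exact ⟨fun h => absurd h (irr a), fun h => absurd h (lt_irrefl a)⟩
    · exact ⟨fun _ => h, fun _ => tri _ _ h (fun h' => hmM ((key b a h).1 h'))⟩

/-- for a finite alphabet with at least two symbols and
`K = (Id, π)` with `π` a linear (strict total) order, `BWT_K` is
rank-invertible iff `π` is the standard order or its reverse. -/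
theorem bwtK_two_orders_rank_invertible_iff [LinearOrder α] [Fintype α]
    (hcard : 2 ≤ Fintype.card α)
    (π : α → α → Prop) (hπ : IsStrictTotalOrder α π) :
    RankInvertible (fun d => if d % 2 = 0 then (fun a b : α => a < b) else π) ↔
      ((π = fun a b : α => a < b) ∨ (π = fun a b : α => b < a)) := by
  have : Nonempty α := Fintype.card_pos_iff.mp (by omega)
  constructor
  · exact fun h => mono_of_inv hπ h
  · rintro (rfl | rfl)
    · exact rankInv_id
    · exact rankInv_rev

end Paper
end
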